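/- If A satisfies the axioms (1)–(9), then A is representable by n-ary partial functions: there exist a set X, an equivalence relation E on X, and an injective map θ from A into the n-ary partial functions on X such that (i) for every a ∈ A, whenever θ(a) is defined at x ∈ X^n, the points x₁,…,xₙ and θ(a)(x) are all E-equivalent; (ii) θ(⟨a₁,…,aₙ⟩∘b) = ⟨θ(a₁),…,θ(aₙ)⟩∘θ(b) for all a₁,…,aₙ, b ∈ A (with composition of partial functions as defined); and (iii) for every a ∈ A and every i, θ(Aᵢa) is defined at x ∈ X^n with value xᵢ if and only if x₁,…,xₙ are pairwise E-equivalent and θ(a) is undefined at x. -/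

import Mathlib

/-!
The representation is a Cayley representation modulo prime filters.

Write `p_a` for the map `t ↦ ⟨Aa⟩∘t` (`MAlg.tst`); then `t ↦ ⟨Da⟩∘t` is `p_{A_j a}` for any `j`. The
twisted laws make the `p_a` idempotent, commuting (`Ax.tst_comm`), with `p_a` and `p_{A_j a}`
complementary: their product is `0`, and by the quasiequation they are jointly injective. Let `T`
be the commutative monoid of maps generated by the `p_a` (`MAlg.tests`). Each `f ∈ T` satisfies
`f(⟨a⟩∘b) = ⟨f a⟩∘b`, and `f a = 0` implies `f ∘ p_{A_j a} = 0` (`Ax.kill_dom`).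

A prime filter (`MAlg.IsPrime`) is a submonoid `F ≤ T` omitting the zero map and containing `p_a` or
`p_{A_j a}` for every `a`. It yields an equivalence relation `a ~ b` iff `f a = f b` for some
`f ∈ F`, compatible with composition, for which `a ~ 0` iff `p_a ∈ F` (`IsPrime.rel_zero_iff`).
The base of the representation is the disjoint union over all prime `F` of the nonzero `~`-classes;
`E` is equality of `F`, and `θ(b)([a₁],…,[aₙ]) = [⟨a⟩∘b]`, undefined when this class is zero.
Composition is preserved by superassociativity and antidomain by the twisted laws. For `b ≠ c`, a
submonoid of `T` maximal among those separating `b` and `c` is prime by the quasiequation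
(`Ax.exists_prime`), and there `θ(b)` and `θ(c)` differ at `([π₁],…,[πₙ])`.
-/

universe u


/-- Composition of `n`-ary partial functions: `⟨f₁,…,fₙ⟩∘g` is defined at `x`
iff each `fᵢ(x)` is defined and `g` is defined at `(f₁(x),…,fₙ(x))`,
in which case its value is `g(f₁(x),…,fₙ(x))`. -/
def nComp {n : ℕ} {X : Type*} (f : Fin n → ((Fin n → X) →. X))
    (g : (Fin n → X) →. X) : (Fin n → X) →. X := fun x =>
  Part.mk (∃ h : ∀ i, (f i x).Dom, (g fun i => (f i x).get (h i)).Dom)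
    (fun h => (g fun i => (f i x).get (h.choose i)).get h.choose_spec)

/-- The `i`-th domain operation: `Dᵢf` is defined at `x` with value `xᵢ` iff `f(x)` is defined. -/
def nDom {n : ℕ} {X : Type*} (i : Fin n) (f : (Fin n → X) →. X) :
    (Fin n → X) →. X := fun x => Part.mk (f x).Dom (fun _ => x i)

/-- The `i`-th antidomain operation: `Aᵢf` is defined at `x` with value `xᵢ` iff `f(x)` is undefined. -/
def nAnti {n : ℕ} {X : Type*} (i : Fin n) (f : (Fin n → X) →. X) :
    (Fin n → X) →. X := fun x => Part.mk (¬ (f x).Dom) (fun _ => x i)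


/-- An algebra with an `(n+1)`-ary composition `⟨a₁,…,aₙ⟩∘b` and
`n` antidomain operations `A₁,…,Aₙ`. -/
structure MAlg (n : ℕ) (A : Type*) where
  comp : (Fin n → A) → A → A
  anti : Fin n → A → A

namespace MAlg

variable {n : ℕ} {A : Type*} [Inhabited A]

/-- `⟨Aa⟩ = (A₁a,…,Aₙa)`. -/
def avec (M : MAlg n A) (a : A) : Fin n → A := fun i => M.anti i a

/-- `0 := ⟨Ab⟩∘b` (independent of `b` by axiom (3)). -/
def zero (M : MAlg n A) : A := M.comp (M.avec default) default

/-- `πᵢ := Aᵢ0`. -/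
def pi (M : MAlg n A) (i : Fin n) : A := M.anti i M.zero

/-- `Dᵢa := Aᵢ(Aᵢa)`. -/
def dom (M : MAlg n A) (i : Fin n) (a : A) : A := M.anti i (M.anti i a)

/-- `⟨Da⟩ = (D₁a,…,Dₙa)`. -/
def dvec (M : MAlg n A) (a : A) : Fin n → A := fun i => M.dom i a

/-- The chain `⟨Da₁⟩∘(⟨Da₂⟩∘(⋯∘(⟨Daₙ⟩∘t)))`. -/
def dchain (M : MAlg n A) (a : Fin n → A) (t : A) : A :=
  (List.ofFn a).foldr (fun u acc => M.comp (M.dvec u) acc) t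

/-- Axioms (1)–(9). -/
structure Ax (M : MAlg n A) : Prop where
  /-- (1) superassociativity -/
  ax1 : ∀ (a b : Fin n → A) (c : A),
    M.comp (fun i => M.comp a (b i)) c = M.comp a (M.comp b c)
  /-- (2) `⟨π₁,…,πₙ⟩∘a = a` -/
  ax2 : ∀ a : A, M.comp M.pi a = a
  /-- (3) `⟨Aa⟩∘a = ⟨Ab⟩∘b` -/
  ax3 : ∀ a b : A, M.comp (M.avec a) a = M.comp (M.avec b) b
  /-- (4) `⟨a₁,…,0,…,aₙ⟩∘b = 0` with `0` in any position -/
  ax4 : ∀ (a : Fin n → A) (i : Fin n) (b : A),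
    M.comp (Function.update a i M.zero) b = M.zero
  /-- (5) `⟨a⟩∘0 = 0` -/
  ax5 : ∀ a : Fin n → A, M.comp a M.zero = M.zero
  /-- (6) the twisted laws for antidomain -/
  ax6 : ∀ (a : Fin n → A) (i : Fin n) (b : A),
    M.comp a (M.anti i b) = M.comp (M.avec (M.comp a b)) (M.dchain a (a i))
  /-- (7) the quasiequation -/
  ax7 : ∀ a b c : A,
    M.comp (M.dvec a) b = M.comp (M.dvec a) c →
    M.comp (M.avec a) b = M.comp (M.avec a) c → b = c
  /-- (8) `⟨Da⟩∘a = a` -/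
  ax8 : ∀ a : A, M.comp (M.dvec a) a = a
  /-- (9) `Aᵢ(Aⱼa) = Aᵢ(Aₖa)` -/
  ax9 : ∀ (i j k : Fin n) (a : A), M.anti i (M.anti j a) = M.anti i (M.anti k a)

end MAlg

namespace MAlg

variable {n : ℕ} {A : Type*} [Inhabited A]

/-- The map `t ↦ ⟨Aa⟩∘t`, an element of the monoid of self-maps of `A`. -/
def tst (M : MAlg n A) (a : A) : Function.End A := fun t => M.comp (M.avec a) t

/-- The monoid of self-maps of `A` generated by the maps `t ↦ ⟨Aa⟩∘t`. -/
def tests (M : MAlg n A) : Submonoid (Function.End A) := Submonoid.closure (Set.range M.tst)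

/-! ### Calculus of antidomain maps -/

namespace Ax

variable {M : MAlg n A} (hM : M.Ax)
include hM

lemma avec_comp_self (a : A) : M.tst a a = M.zero := hM.ax3 a default

lemma tst_zero (a : A) : M.tst a M.zero = M.zero := hM.ax5 _

lemma tst_of_zero (t : A) : M.tst M.zero t = t := hM.ax2 t

lemma dvec_eq (j : Fin n) (a : A) : M.dvec a = M.avec (M.anti j a) :=
  funext fun i => hM.ax9 i i j a

lemma zero_comp {a : Fin n → A} {i : Fin n} (h : a i = M.zero) (b : A) :
    M.comp a b = M.zero := by
  have := hM.ax4 a i b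
  rwa [Function.update_eq_self_iff.2 h.symm] at this

lemma tst_comp (e : A) (a : Fin n → A) (b : A) :
    M.tst e (M.comp a b) = M.comp (fun i => M.tst e (a i)) b :=
  (hM.ax1 _ _ _).symm

omit [Inhabited A] hM in
lemma dchain_eq {a : Fin n → A} {t : A} (h : ∀ i, M.comp (M.dvec (a i)) t = t) :
    M.dchain a t = t := by
  unfold dchain
  have h' : ∀ u ∈ List.ofFn a, M.comp (M.dvec u) t = t := by
    intro u hu
    obtain ⟨i, rfl⟩ := (List.mem_ofFn' a u).1 hu
    exact h i
  generalize List.ofFn a = l at h'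
  induction l with
  | nil => rfl
  | cons u l ih =>
    rw [List.foldr_cons, ih fun v hv => h' v (List.mem_cons_of_mem _ hv)]
    exact h' u List.mem_cons_self

/-- The twisted law for `⟨Aa⟩`: the chain of domains collapses, because by (9) the vector
`⟨D(Aⱼa)⟩` does not depend on `j`. -/
lemma tst_anti (a : A) (i : Fin n) (b : A) :
    M.tst a (M.anti i b) = M.tst (M.tst a b) (M.anti i a) := by
  have h := hM.ax6 (M.avec a) i b
  rw [dchain_eq] at h
  · exact h
  · intro k
    have e : M.dvec (M.avec a k) = M.dvec (M.anti i a) := by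
      funext l
      change M.anti l (M.anti l (M.anti k a)) = M.anti l (M.anti l (M.anti i a))
      rw [hM.ax9 l k i a]
    rw [e]
    exact hM.ax8 _

lemma tst_tst (a b t : A) : M.tst a (M.tst b t) = M.tst (M.tst a b) (M.tst a t) := by
  rw [show M.tst b t = M.comp (M.avec b) t from rfl, show M.tst a t = M.comp (M.avec a) t from rfl,
    tst_comp hM, tst_comp hM]
  congr 1
  funext i
  exact tst_anti hM a i b

lemma tst_idem (a t : A) : M.tst a (M.tst a t) = M.tst a t := by
  rw [tst_tst hM, avec_comp_self hM, tst_of_zero hM]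

lemma dom_tst (j : Fin n) (a t : A) : M.tst (M.anti j a) (M.tst a t) = M.zero := by
  rw [show M.tst a t = M.comp (M.avec a) t from rfl, tst_comp hM]
  exact zero_comp hM (i := j) (avec_comp_self hM (M.anti j a)) t

lemma tst_dom (j : Fin n) (a t : A) : M.tst a (M.tst (M.anti j a) t) = M.zero := by
  rw [tst_tst hM, tst_anti hM, avec_comp_self hM, tst_of_zero hM, dom_tst hM]

lemma quasi (j : Fin n) (a : A) {b c : A} (h₁ : M.tst (M.anti j a) b = M.tst (M.anti j a) c)
    (h₂ : M.tst a b = M.tst a c) : b = c :=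
  hM.ax7 a b c (by rw [dvec_eq hM j]; exact h₁) h₂

lemma tst_tst_self (a b : A) : M.tst b (M.tst a b) = M.zero := by
  rw [tst_tst hM, avec_comp_self hM, tst_zero hM]

/-- The left regular band identity `p_b p_a p_b = p_b p_a`. -/
lemma tst_regular (a b t : A) : M.tst b (M.tst a (M.tst b t)) = M.tst b (M.tst a t) := by
  rw [tst_tst hM a b, tst_tst hM b (M.tst a b), tst_tst_self hM, tst_of_zero hM]

lemma tst_comm (j : Fin n) (a b t : A) : M.tst a (M.tst b t) = M.tst b (M.tst a t) := by
  apply quasi hM j b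
  · rw [dom_tst hM, ← tst_regular hM a (M.anti j b), dom_tst hM, tst_zero hM, tst_zero hM]
  · rw [tst_regular hM, tst_idem hM]

lemma dom_fixes (j : Fin n) {c x : A} (h : M.tst c x = M.zero) : M.tst (M.anti j c) x = x :=
  quasi hM j c (tst_idem hM _ _) (by rw [tst_dom hM, h])

/-! ### The monoid of tests -/

lemma tests_comm (j : Fin n) {f g : Function.End A} (hf : f ∈ M.tests) (hg : g ∈ M.tests) :
    f * g = g * f := by
  induction hf, hg using Submonoid.closure_induction₂ with
  | mem x y hx hy =>
    obtain ⟨a, rfl⟩ := hx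
    obtain ⟨b, rfl⟩ := hy
    exact funext fun t => tst_comm hM j a b t
  | one_left x hx => simp
  | one_right x hx => simp
  | mul_left x y z _ _ _ h₁ h₂ => rw [mul_assoc, h₂, ← mul_assoc, h₁, mul_assoc]
  | mul_right x y z _ _ _ h₁ h₂ => rw [← mul_assoc, h₁, mul_assoc, h₂, mul_assoc]

lemma tests_comp {f : Function.End A} (hf : f ∈ M.tests) :
    ∀ (a : Fin n → A) (b : A), f (M.comp a b) = M.comp (fun i => f (a i)) b := by
  induction hf using Submonoid.closure_induction with
  | mem x hx => obtain ⟨e, rfl⟩ := hx; exact tst_comp hM e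
  | one => intro a b; rfl
  | mul x y _ _ h₁ h₂ =>
    intro a b
    change x (y _) = _
    rw [h₂, h₁]
    rfl

lemma tests_zero {f : Function.End A} (hf : f ∈ M.tests) : f M.zero = M.zero := by
  induction hf using Submonoid.closure_induction with
  | mem x hx => obtain ⟨e, rfl⟩ := hx; exact tst_zero hM e
  | one => rfl
  | mul x y _ _ h₁ h₂ =>
    change x (y _) = _
    rw [h₂, h₁]

/-- A test that annihilates `a` is disjoint from the domain of `a`. -/
lemma kill_dom (j : Fin n) {f : Function.End A} (hf : f ∈ M.tests) :
    ∀ a t : A, f a = M.zero → f (M.tst (M.anti j a) t) = M.zero := by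
  induction hf using Submonoid.closure_induction_left with
  | one =>
    intro a t h
    change a = M.zero at h
    subst h
    change M.tst _ t = M.zero
    rw [← tst_of_zero hM t, dom_tst hM]
  | mul_left x hx g hg ih =>
    obtain ⟨b, rfl⟩ := hx
    have hc : ∀ t, M.tst b (g t) = g (M.tst b t) := fun t =>
      congrFun (tests_comm hM j (Submonoid.subset_closure ⟨b, rfl⟩) hg) t
    intro a t h
    change M.tst b (g a) = _ at h
    change M.tst b (g _) = _
    rw [hc] at h ⊢
    -- with `c = ⟨Ab⟩∘a`, the element `⟨Ab⟩∘⟨Da⟩∘t` lies in the domain of `c`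
    have h₁ : M.tst (M.tst b a) (M.tst b (M.tst (M.anti j a) t)) = M.zero := by
      rw [← tst_tst hM, tst_dom hM, tst_zero hM]
    rw [← dom_fixes hM j h₁]
    exact ih _ _ h

end Ax

/-! ### Prime filters and their equivalence relations -/

/-- A prime filter of tests: a submonoid of `M.tests` omitting the zero map and containing, for
every `a`, the antidomain map or the domain map of `a`. -/
structure IsPrime (M : MAlg n A) (F : Submonoid (Function.End A)) : Prop where
  le_tests : F ≤ M.tests
  ne_zero : ∀ f ∈ F, ∃ t, f t ≠ M.zero
  mem_or : ∀ (j : Fin n) (a : A), M.tst a ∈ F ∨ M.tst (M.anti j a) ∈ F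

/-- Two elements are related modulo `F` if some member of `F` identifies them. -/
def rel (F : Submonoid (Function.End A)) (a b : A) : Prop := ∃ f ∈ F, f a = f b

lemma rel_refl {A : Type*} (F : Submonoid (Function.End A)) (a : A) : rel F a a := ⟨1, F.one_mem, rfl⟩

lemma rel_symm {A : Type*} {F : Submonoid (Function.End A)} {a b : A} (h : rel F a b) : rel F b a := by
  obtain ⟨f, hf, e⟩ := h
  exact ⟨f, hf, e.symm⟩

namespace IsPrime

variable {M : MAlg n A} {F : Submonoid (Function.End A)} (hF : M.IsPrime F) (hM : M.Ax)
  (j : Fin n)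
include hF hM

include j in
lemma comm {f g : Function.End A} (hf : f ∈ F) (hg : g ∈ F) (t : A) : f (g t) = g (f t) :=
  congrFun (hM.tests_comm j (hF.le_tests hf) (hF.le_tests hg)) t

include j in
lemma rel_trans {a b c : A} (h₁ : rel F a b) (h₂ : rel F b c) : rel F a c := by
  obtain ⟨f, hf, e⟩ := h₁
  obtain ⟨g, hg, e'⟩ := h₂
  refine ⟨f * g, F.mul_mem hf hg, ?_⟩
  change f (g a) = f (g c)
  rw [hF.comm hM j hf hg, e, ← hF.comm hM j hf hg, e']

include j in
lemma rel_comp {a a' : Fin n → A} (h : ∀ i, rel F (a i) (a' i)) (b : A) :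
    rel F (M.comp a b) (M.comp a' b) := by
  have key : ∀ s : Finset (Fin n), ∃ f ∈ F, ∀ i ∈ s, f (a i) = f (a' i) := by
    intro s
    induction s using Finset.induction_on with
    | empty => exact ⟨1, F.one_mem, by simp⟩
    | insert k s _ ih =>
      obtain ⟨f, hf, e⟩ := ih
      obtain ⟨g, hg, e'⟩ := h k
      refine ⟨g * f, F.mul_mem hg hf, fun i hi => ?_⟩
      change g (f (a i)) = g (f (a' i))
      rcases Finset.mem_insert.1 hi with rfl | hi
      · rw [hF.comm hM j hg hf, e', hF.comm hM j hf hg]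
      · rw [e i hi]
  obtain ⟨f, hf, e⟩ := key Finset.univ
  refine ⟨f, hf, ?_⟩
  rw [hM.tests_comp (hF.le_tests hf), hM.tests_comp (hF.le_tests hf)]
  congr 1
  funext i
  exact e i (Finset.mem_univ i)

lemma rel_comp_zero {a : Fin n → A} {i : Fin n} (h : rel F (a i) M.zero) (b : A) :
    rel F (M.comp a b) M.zero := by
  obtain ⟨f, hf, e⟩ := h
  refine ⟨f, hf, ?_⟩
  rw [hM.tests_zero (hF.le_tests hf)] at e ⊢
  rw [hM.tests_comp (hF.le_tests hf)]
  exact hM.zero_comp (i := i) e b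

omit hF in
lemma rel_tst {e : A} (he : M.tst e ∈ F) (t : A) : rel F (M.tst e t) t :=
  ⟨_, he, hM.tst_idem _ _⟩

include j in
lemma rel_zero_iff (a : A) : rel F a M.zero ↔ M.tst a ∈ F := by
  constructor
  · rintro ⟨f, hf, e⟩
    rw [hM.tests_zero (hF.le_tests hf)] at e
    refine (hF.mem_or j a).resolve_right fun h => ?_
    obtain ⟨t, ht⟩ := hF.ne_zero _ (F.mul_mem hf h)
    exact ht (hM.kill_dom j (hF.le_tests hf) a t e)
  · intro h
    exact ⟨_, h, by rw [hM.avec_comp_self, hM.tst_zero]⟩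

include j in
lemma rel_dchain {a : Fin n → A} (h : ∀ i, ¬ rel F (a i) M.zero) (t : A) :
    rel F (M.dchain a t) t := by
  unfold dchain
  have h' : ∀ u ∈ List.ofFn a, M.tst (M.anti j u) ∈ F := by
    intro u hu
    obtain ⟨i, rfl⟩ := (List.mem_ofFn' a u).1 hu
    exact (hF.mem_or j _).resolve_left fun h₁ => h i ((hF.rel_zero_iff hM j _).2 h₁)
  generalize List.ofFn a = l at h'
  induction l with
  | nil => exact rel_refl _ _
  | cons u l ih =>
    have h₁ := ih fun v hv => h' v (List.mem_cons_of_mem _ hv)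
    rw [List.foldr_cons, hM.dvec_eq j]
    exact hF.rel_trans hM j (rel_tst hM (h' u List.mem_cons_self) _) h₁

include j in
/-- Modulo `F`, the element `⟨a⟩∘Aᵢb` behaves as an antidomain: it is `aᵢ` when `⟨a⟩∘b ~ 0`. -/
lemma rel_comp_anti {a : Fin n → A} (h : ∀ i, ¬ rel F (a i) M.zero) (i : Fin n) {b : A}
    (hb : rel F (M.comp a b) M.zero) : rel F (M.comp a (M.anti i b)) (a i) := by
  rw [hM.ax6]
  exact hF.rel_trans hM j (rel_tst hM ((hF.rel_zero_iff hM j _).1 hb) _) (hF.rel_dchain hM j h _)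

include j in
/-- Modulo `F`, the element `⟨a⟩∘Aᵢb` vanishes when `⟨a⟩∘b` does not. -/
lemma rel_comp_anti_zero {a : Fin n → A} (i : Fin n) {b : A}
    (hb : ¬ rel F (M.comp a b) M.zero) : rel F (M.comp a (M.anti i b)) M.zero := by
  rw [hM.ax6]
  refine ⟨M.tst (M.anti j (M.comp a b)),
    (hF.mem_or j _).resolve_left fun h => hb ((hF.rel_zero_iff hM j _).2 h), ?_⟩
  rw [hM.tst_zero]
  exact hM.dom_tst j _ _

end IsPrime

/-- Adjoining to `F` one antidomain map that does not belong to it destroys the separation of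
`b` and `c`, if `F` is maximal among the monoids of tests that separate them. -/
lemma Ax.maximal_aux {M : MAlg n A} (hM : M.Ax) (j : Fin n) {b c : A}
    {F : Submonoid (Function.End A)}
    (hF : Maximal (fun G : Submonoid (Function.End A) => G ≤ M.tests ∧ ∀ f ∈ G, f b ≠ f c) F)
    {e : A} (he : M.tst e ∉ F) : ∃ f ∈ F, f (M.tst e b) = f (M.tst e c) := by
  have hT : M.tst e ∈ M.tests := Submonoid.subset_closure ⟨e, rfl⟩
  have hi : M.tst e * M.tst e = M.tst e := funext fun t => hM.tst_idem e t
  by_contra! hne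
  let G : Submonoid (Function.End A) :=
    { carrier := {h | ∃ f ∈ F, h = f ∨ h = f * M.tst e}
      one_mem' := ⟨1, F.one_mem, Or.inl rfl⟩
      mul_mem' := by
        rintro x y ⟨f, hf, hx⟩ ⟨g, hg, hy⟩
        have hc : M.tst e * g = g * M.tst e := hM.tests_comm j hT (hF.prop.1 hg)
        refine ⟨f * g, F.mul_mem hf hg, ?_⟩
        rcases hx with rfl | rfl <;> rcases hy with rfl | rfl
        · exact Or.inl rfl
        · exact Or.inr (mul_assoc _ _ _).symm
        · right; rw [mul_assoc, hc, mul_assoc]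
        · right; rw [mul_assoc, ← mul_assoc (M.tst e), hc, mul_assoc g, hi, mul_assoc] }
  have hG : G ≤ M.tests ∧ ∀ f ∈ G, f b ≠ f c := by
    constructor
    · rintro x ⟨f, hf, rfl | rfl⟩
      · exact hF.prop.1 hf
      · exact M.tests.mul_mem (hF.prop.1 hf) hT
    · rintro x ⟨f, hf, rfl | rfl⟩
      · exact hF.prop.2 _ hf
      · exact hne f hf
  have hle : G ≤ F := hF.le_of_ge hG fun f hf => ⟨f, hf, Or.inl rfl⟩
  exact he (hle ⟨1, F.one_mem, Or.inr (one_mul _).symm⟩)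

/-- Distinct elements are separated modulo some prime filter. -/
lemma Ax.exists_prime {M : MAlg n A} (hM : M.Ax) {b c : A} (hbc : b ≠ c) :
    ∃ F, M.IsPrime F ∧ ¬ rel F b c := by
  obtain ⟨F, -, hF⟩ := zorn_le_nonempty₀
    {G : Submonoid (Function.End A) | G ≤ M.tests ∧ ∀ f ∈ G, f b ≠ f c}
    (fun C hC hch G hG => by
      refine ⟨sSup C, ⟨sSup_le fun H hH => (hC hH).1, fun f hf => ?_⟩, fun H hH => le_sSup hH⟩
      obtain ⟨H, hH, hfH⟩ := (Submonoid.mem_sSup_of_directedOn ⟨G, hG⟩ hch.directedOn).1 hf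
      exact (hC hH).2 f hfH)
    ⊥ ⟨bot_le, fun f hf => by rw [Submonoid.mem_bot.1 hf]; exact hbc⟩
  refine ⟨F, ⟨hF.prop.1, fun f hf => ?_, fun j a => ?_⟩, fun ⟨f, hf, e⟩ => hF.prop.2 f hf e⟩
  · by_contra! h
    exact hF.prop.2 f hf (by rw [h, h])
  · by_contra! h
    obtain ⟨f, hf, e₁⟩ := hM.maximal_aux j hF h.1
    obtain ⟨g, hg, e₂⟩ := hM.maximal_aux j hF h.2
    have hc : ∀ {f g : Function.End A}, f ∈ M.tests → g ∈ M.tests → ∀ t, f (g t) = g (f t) :=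
      fun hf hg t => congrFun (hM.tests_comm j hf hg) t
    have hT : ∀ e, M.tst e ∈ M.tests := fun e => Submonoid.subset_closure ⟨e, rfl⟩
    have hfT := hF.prop.1 hf
    have hgT := hF.prop.1 hg
    refine hF.prop.2 (f * g) (F.mul_mem hf hg) (hM.quasi j a ?_ ?_)
    · change M.tst (M.anti j a) (f (g b)) = M.tst (M.anti j a) (f (g c))
      rw [hc (hT _) hfT, hc (hT _) hgT, e₂, hc (hT _) hfT, hc (hT _) hgT]
    · change M.tst a (f (g b)) = M.tst a (f (g c))
      rw [hc hfT hgT, hc hfT hgT, hc (hT _) hgT, hc (hT _) hfT, e₁, hc (hT _) hgT, hc (hT _) hfT]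

/-! ### The representation -/

/-- Pairs of a prime filter `F` and an element of `A` that is nonzero modulo `F`. -/
def Pre (M : MAlg n A) : Type _ :=
  {p : Submonoid (Function.End A) × A // M.IsPrime p.1 ∧ ¬ rel p.1 p.2 M.zero}

/-- Equality of the filters, and equivalence of the elements modulo the filter. -/
def preSetoid {M : MAlg n A} (hM : M.Ax) (j : Fin n) : Setoid M.Pre where
  r p q := p.1.1 = q.1.1 ∧ rel p.1.1 p.1.2 q.1.2
  iseqv :=
    { refl := fun p => ⟨rfl, rel_refl _ _⟩
      symm := fun {p q} h => ⟨h.1.symm, by rw [← h.1]; exact rel_symm h.2⟩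
      trans := fun {p q r} h₁ h₂ =>
        ⟨h₁.1.trans h₂.1, p.2.1.rel_trans hM j h₁.2 (by rw [h₁.1]; exact h₂.2)⟩ }

/-- The base of the representation: all nonzero classes modulo all prime filters. -/
def Pt {M : MAlg n A} (hM : M.Ax) (j : Fin n) : Type _ := Quotient (preSetoid hM j)

section Rep

variable {M : MAlg n A} {hM : M.Ax} {j : Fin n}

/-- The class of `a` modulo `F`. -/
def Pt.mk (F : Submonoid (Function.End A)) (a : A) (h : M.IsPrime F ∧ ¬ rel F a M.zero) :
    Pt hM j := Quotient.mk (preSetoid hM j) ⟨(F, a), h⟩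

/-- The prime filter to which a point belongs. -/
def Pt.filter (x : Pt hM j) : Submonoid (Function.End A) :=
  Quotient.lift (fun p : M.Pre => p.1.1) (fun p q (h : (preSetoid hM j).r p q) => h.1) x

lemma Pt.filter_mk {F : Submonoid (Function.End A)} {a : A} (h) :
    (Pt.mk F a h : Pt hM j).filter = F := rfl

lemma Pt.mk_eq {F G : Submonoid (Function.End A)} {a b : A} {h h'} :
    (Pt.mk F a h : Pt hM j) = Pt.mk G b h' ↔ F = G ∧ rel F a b :=
  Quotient.eq (r := preSetoid hM j)

lemma Pt.exists_mk {F : Submonoid (Function.End A)} (x : Pt hM j) (hx : x.filter = F) :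
    ∃ a h, x = Pt.mk F a h := by
  induction x using Quotient.inductionOn with
  | h p =>
    obtain ⟨⟨G, a⟩, h⟩ := p
    change G = F at hx
    subst hx
    exact ⟨a, h, rfl⟩

/-- The graph of `θ(b)`: it sends `([a₁],…,[aₙ])` to `[⟨a⟩∘b]` if this class is nonzero. -/
def graph (b : A) (x : Fin n → Pt hM j) (y : Pt hM j) : Prop :=
  ∃ (F : Submonoid (Function.End A)) (a : Fin n → A)
    (h : ∀ i, M.IsPrime F ∧ ¬ rel F (a i) M.zero)
    (h' : M.IsPrime F ∧ ¬ rel F (M.comp a b) M.zero),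
    (∀ i, x i = Pt.mk F (a i) (h i)) ∧ y = Pt.mk F (M.comp a b) h'

lemma graph_mk {F : Submonoid (Function.End A)} {a : Fin n → A}
    (h : ∀ i, M.IsPrime F ∧ ¬ rel F (a i) M.zero) (b : A) (y : Pt hM j) :
    graph b (fun i => (Pt.mk F (a i) (h i) : Pt hM j)) y ↔
      ∃ h', y = Pt.mk F (M.comp a b) h' := by
  constructor
  · rintro ⟨G, a', k, k', hx, rfl⟩
    obtain rfl : F = G := (Pt.mk_eq.1 (hx j)).1
    have hr : rel F (M.comp a b) (M.comp a' b) :=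
      k'.1.rel_comp hM j (fun i => (Pt.mk_eq.1 (hx i)).2) b
    exact ⟨⟨k'.1, fun h₀ => k'.2 (k'.1.rel_trans hM j (rel_symm hr) h₀)⟩,
      Pt.mk_eq.2 ⟨rfl, rel_symm hr⟩⟩
  · rintro ⟨h', rfl⟩
    exact ⟨F, a, h, h', fun _ => rfl, rfl⟩

lemma graph_unique {b : A} {x : Fin n → Pt hM j} {y z : Pt hM j} (hy : graph b x y)
    (hz : graph b x z) : y = z := by
  obtain ⟨F, a, h, h', hx, rfl⟩ := hy
  obtain rfl : x = fun i => Pt.mk F (a i) (h i) := funext hx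
  obtain ⟨_, rfl⟩ := (graph_mk h b z).1 hz
  rfl

/-- The partial function with graph `graph b`. -/
noncomputable def theta (hM : M.Ax) (j : Fin n) (b : A) : (Fin n → Pt hM j) →. Pt hM j :=
  fun x => Part.mk (∃ y, graph b x y) (fun h => h.choose)

lemma mem_theta {b : A} {x : Fin n → Pt hM j} {y : Pt hM j} :
    y ∈ theta hM j b x ↔ graph b x y := by
  constructor
  · rintro ⟨h, rfl⟩
    exact h.choose_spec
  · intro h
    exact ⟨⟨y, h⟩, graph_unique (Exists.choose_spec ⟨y, h⟩) h⟩

lemma theta_dom_mk {F : Submonoid (Function.End A)} {a : Fin n → A}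
    (h : ∀ i, M.IsPrime F ∧ ¬ rel F (a i) M.zero) (b : A) :
    (theta hM j b (fun i => Pt.mk F (a i) (h i))).Dom ↔ ¬ rel F (M.comp a b) M.zero := by
  rw [Part.dom_iff_mem]
  simp only [mem_theta, graph_mk]
  constructor
  · rintro ⟨y, h', -⟩
    exact h'.2
  · intro h'
    exact ⟨_, ⟨(h j).1, h'⟩, rfl⟩

end Rep

end MAlg

lemma mem_nComp {n : ℕ} {X : Type*} {f : Fin n → ((Fin n → X) →. X)} {g : (Fin n → X) →. X}
    {x : Fin n → X} {y : X} :
    y ∈ nComp f g x ↔ ∃ z : Fin n → X, (∀ i, z i ∈ f i x) ∧ y ∈ g z := by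
  constructor
  · rintro ⟨⟨h, h'⟩, rfl⟩
    exact ⟨fun i => (f i x).get (h i), fun i => Part.get_mem _, Part.get_mem h'⟩
  · rintro ⟨z, hz, hy⟩
    have h : ∀ i, (f i x).Dom := fun i => (hz i).1
    obtain rfl : (fun i => (f i x).get (h i)) = z := funext fun i => (hz i).2
    exact ⟨⟨h, hy.1⟩, hy.2⟩

/-- Every algebra satisfying axioms (1)–(9) is representable by `n`-ary partial
functions: there are a base `X`, an equivalence relation `E` on `X`, and an
injective map `θ` such that every `θ(a)` relates only `E`-equivalent points,
`θ` preserves composition, and `θ(Aᵢa)` is defined at `x` with value `xᵢ` iff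
`x₁,…,xₙ` are pairwise `E`-equivalent and `θ(a)` is undefined at `x`. -/
theorem representation_theorem {n : ℕ} (hn : 1 ≤ n) {A : Type u} [Inhabited A]
    (M : MAlg n A) (hM : M.Ax) :
    ∃ (X : Type u) (E : X → X → Prop), Equivalence E ∧
      ∃ θ : A → ((Fin n → X) →. X),
        Function.Injective θ ∧
        (∀ (a : A) (x : Fin n → X) (y : X), y ∈ θ a x →
          (∀ i j : Fin n, E (x i) (x j)) ∧ (∀ i : Fin n, E (x i) y)) ∧
        (∀ (a : Fin n → A) (b : A),
          θ (M.comp a b) = nComp (fun i => θ (a i)) (θ b)) ∧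
        (∀ (a : A) (i : Fin n) (x : Fin n → X) (y : X),
          y ∈ θ (M.anti i a) x ↔
            y = x i ∧ (∀ j k : Fin n, E (x j) (x k)) ∧ ¬ (θ a x).Dom) := by
  let j : Fin n := ⟨0, hn⟩
  refine ⟨MAlg.Pt hM j, fun x y => x.filter = y.filter,
    ⟨fun _ => rfl, fun h => h.symm, fun h h' => h.trans h'⟩, MAlg.theta hM j, ?_, ?_, ?_, ?_⟩
  · intro b c hbc
    by_contra hne
    obtain ⟨F, hF, hsep⟩ := hM.exists_prime hne
    -- a nonzero `b` would be the value of `θ(b)`, hence of `θ(c)`, at `(π₁,…,πₙ)`, forcing `b ~ c`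
    have key : ∀ b c, MAlg.theta hM j b = MAlg.theta hM j c → ¬ MAlg.rel F b c →
        MAlg.rel F b M.zero := by
      intro b c hbc hsep
      by_contra hb
      have hpi : ∀ i, M.IsPrime F ∧ ¬ MAlg.rel F (M.pi i) M.zero := fun i =>
        ⟨hF, fun h => hb (by simpa only [hM.ax2] using hF.rel_comp_zero hM h b)⟩
      have hy : MAlg.Pt.mk F (M.comp M.pi b) ⟨hF, by rwa [hM.ax2]⟩ ∈
          MAlg.theta hM j b (fun i => MAlg.Pt.mk F (M.pi i) (hpi i)) :=
        MAlg.mem_theta.2 ((MAlg.graph_mk hpi b _).2 ⟨_, rfl⟩)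
      rw [hbc, MAlg.mem_theta, MAlg.graph_mk] at hy
      obtain ⟨_, e⟩ := hy
      have := (MAlg.Pt.mk_eq.1 e).2
      rw [hM.ax2, hM.ax2] at this
      exact hsep this
    exact hsep (hF.rel_trans hM j (key b c hbc hsep)
      (MAlg.rel_symm (key c b hbc.symm fun h => hsep (MAlg.rel_symm h))))
  · intro a x y hy
    obtain ⟨F, c, h, h', hx, rfl⟩ := MAlg.mem_theta.1 hy
    have e : ∀ i, (x i).filter = F := fun i => by rw [hx i, MAlg.Pt.filter_mk]
    exact ⟨fun i k => (e i).trans (e k).symm, fun i => e i⟩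
  · intro a b
    funext x
    ext y
    rw [mem_nComp]
    simp only [MAlg.mem_theta]
    constructor
    · rintro ⟨F, c, h, h', hx, rfl⟩
      obtain rfl : x = fun i => MAlg.Pt.mk F (c i) (h i) := funext hx
      have hF := h'.1
      have hz : ∀ i, M.IsPrime F ∧ ¬ MAlg.rel F (M.comp c (a i)) M.zero := fun i =>
        ⟨hF, fun h₀ => h'.2 (by
          rw [← hM.ax1]
          exact hF.rel_comp_zero hM (a := fun i => M.comp c (a i)) (i := i) h₀ b)⟩
      refine ⟨fun i => MAlg.Pt.mk F (M.comp c (a i)) (hz i),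
        fun i => (MAlg.graph_mk h _ _).2 ⟨_, rfl⟩, (MAlg.graph_mk hz _ _).2 ?_⟩
      refine ⟨by rwa [hM.ax1], MAlg.Pt.mk_eq.2 ⟨rfl, ?_⟩⟩
      rw [hM.ax1]
      exact MAlg.rel_refl _ _
    · rintro ⟨z, hz, hy⟩
      obtain ⟨F, c, h, -, hx, -⟩ := hz j
      obtain rfl : x = fun i => MAlg.Pt.mk F (c i) (h i) := funext hx
      choose k hk using fun i => (MAlg.graph_mk h _ _).1 (hz i)
      obtain rfl : z = fun i => MAlg.Pt.mk F (M.comp c (a i)) (k i) := funext hk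
      have hy' := (MAlg.graph_mk k b y).1 hy
      simp only [hM.ax1] at hy'
      exact (MAlg.graph_mk h _ _).2 hy'
  · intro a i x y
    constructor
    · intro hy
      obtain ⟨F, c, h, h', hx, rfl⟩ := MAlg.mem_theta.1 hy
      obtain rfl : x = fun i => MAlg.Pt.mk F (c i) (h i) := funext hx
      have hF := h'.1
      have h₀ : MAlg.rel F (M.comp c a) M.zero := by
        by_contra h₁
        exact h'.2 (hF.rel_comp_anti_zero hM j i h₁)
      refine ⟨MAlg.Pt.mk_eq.2 ⟨rfl, hF.rel_comp_anti hM j (fun k => (h k).2) i h₀⟩,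
        fun _ _ => rfl, ?_⟩
      rw [MAlg.theta_dom_mk]
      exact fun h₁ => h₁ h₀
    · rintro ⟨rfl, hE, hd⟩
      choose c h hx using fun k => (x k).exists_mk (F := (x j).filter) (hE k j)
      generalize (x j).filter = F at c h hx
      obtain rfl : x = fun i => MAlg.Pt.mk F (c i) (h i) := funext hx
      rw [MAlg.theta_dom_mk, not_not] at hd
      have hF := (h j).1
      have hr := hF.rel_comp_anti hM j (fun k => (h k).2) i hd
      refine MAlg.mem_theta.2 ((MAlg.graph_mk h _ _).2
        ⟨⟨hF, fun h₀ => (h i).2 (hF.rel_trans hM j (MAlg.rel_symm hr) h₀)⟩,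
          MAlg.Pt.mk_eq.2 ⟨rfl, MAlg.rel_symm hr⟩⟩)
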